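/- Let A be a unital C*-algebra, t ∈ A and ε > 0. If dist(t, R(A)) < ε, then t is 2ε-almost regular. -/

import Mathlib

noncomputable section

/-- A closed two-sided ideal of a topological `ℂ`-algebra `A`. -/
structure ClosedIdeal (A : Type*) [NonUnitalNonAssocRing A] [Module ℂ A] [TopologicalSpace A] : Type _ where
  carrier : Submodule ℂ A
  mul_left_mem : ∀ (a x : A), x ∈ carrier → a * x ∈ carrier
  mul_right_mem : ∀ (a x : A), x ∈ carrier → x * a ∈ carrier
  isClosed : IsClosed (carrier : Set A)

/-- `GL(A)`, the set of invertible elements of the unital algebra `A`. -/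
def glSet (A : Type*) [Monoid A] : Set A := {a | IsUnit a}

/-- `R(A)`: the set of elements `a` of a unital algebra `A` such that for every closed
two-sided ideal `I`, if the image of `a` in `A/I` is left- or right-invertible, then it is
invertible.  (The image of `a` in `A/I` is left invertible iff `1 - b * a ∈ I` for some `b`,
right invertible iff `1 - a * b ∈ I` for some `b`, and invertible iff both hold for one `b`.) -/
def regSet (A : Type*) [Ring A] [Module ℂ A] [TopologicalSpace A] : Set A :=
  {a | ∀ I : ClosedIdeal A,
    ((∃ b, 1 - b * a ∈ I.carrier) ∨ (∃ b, 1 - a * b ∈ I.carrier)) →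
    ∃ b, 1 - b * a ∈ I.carrier ∧ 1 - a * b ∈ I.carrier}

/-- `|t| = (t* t)^(1/2)`, via the continuous functional calculus. -/
noncomputable def cstarAbs {A : Type*} [CStarAlgebra A] (t : A) : A :=
  cfc Real.sqrt (star t * t)

/-- `t` is `ε`-almost regular: the closed two-sided ideal generated by `f_ε(|t|)` equals the
closed two-sided ideal generated by `f_ε(|t*|)`, where `f_ε(x) = max (ε - x) 0`.  (Two elements
generate the same closed two-sided ideal iff they belong to exactly the same closed two-sided
ideals.) -/
def AlmostRegular {A : Type*} [CStarAlgebra A] (ε : ℝ) (t : A) : Prop :=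
  ∀ I : ClosedIdeal A,
    (cfc (fun x : ℝ => max (ε - x) 0) (cstarAbs t) ∈ I.carrier ↔
     cfc (fun x : ℝ => max (ε - x) 0) (cstarAbs (star t)) ∈ I.carrier)


theorem aux_intertwine {A : Type*} [CStarAlgebra A] (t : A) (F : ℝ → ℝ) (hF : Continuous F) :
    cfc F (t * star t) * t = t * cfc F (star t * t) := by
  have hb1 : ∀ x ∈ spectrum ℝ (t * star t), x ∈ Set.Icc (-(‖t * star t‖ * ‖(1 : A)‖ + ‖star t * t‖ * ‖(1:A)‖)) (‖t * star t‖ * ‖(1 : A)‖ + ‖star t * t‖ * ‖(1:A)‖) := by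
    intro x hx
    have h1 := spectrum.norm_le_norm_mul_of_mem hx
    have h2 : 0 ≤ ‖star t * t‖ * ‖(1:A)‖ := by positivity
    rw [Real.norm_eq_abs] at h1
    have := abs_le.mp h1
    constructor <;> linarith [this.1, this.2]
  have hb2 : ∀ x ∈ spectrum ℝ (star t * t), x ∈ Set.Icc (-(‖t * star t‖ * ‖(1 : A)‖ + ‖star t * t‖ * ‖(1:A)‖)) (‖t * star t‖ * ‖(1 : A)‖ + ‖star t * t‖ * ‖(1:A)‖) := by
    intro x hx
    have h1 := spectrum.norm_le_norm_mul_of_mem hx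
    have h2 : 0 ≤ ‖t * star t‖ * ‖(1 : A)‖ := by positivity
    rw [Real.norm_eq_abs] at h1
    have := abs_le.mp h1
    constructor <;> linarith [this.1, this.2]
  have hpoly : ∀ p : Polynomial ℝ, Polynomial.aeval (t * star t) p * t
      = t * Polynomial.aeval (star t * t) p := by
    intro p
    induction p using Polynomial.induction_on' with
    | add p q hp hq => simp [add_mul, mul_add, hp, hq]
    | monomial n a =>
      have : SemiconjBy t (star t * t) (t * star t) := by
        simp [SemiconjBy, mul_assoc]
      have h := (this.pow_right n).eq
      simp only [Polynomial.aeval_monomial, Algebra.algebraMap_eq_smul_one, smul_mul_assoc,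
        one_mul, mul_smul_comm, h]
  have key : ∀ δ : ℝ, 0 < δ → ‖cfc F (t * star t) * t - t * cfc F (star t * t)‖ ≤ δ * (2 * ‖t‖) := by
    intro δ hδ
    obtain ⟨p, hp⟩ := exists_polynomial_near_of_continuousOn (-(‖t * star t‖ * ‖(1 : A)‖ + ‖star t * t‖ * ‖(1 : A)‖))
      (‖t * star t‖ * ‖(1 : A)‖ + ‖star t * t‖ * ‖(1 : A)‖) F hF.continuousOn δ hδ
    have e1 : ‖cfc F (t * star t) - Polynomial.aeval (t * star t) p‖ ≤ δ := by
      rw [← cfc_polynomial p (t * star t) (.mul_star_self t), ← cfc_sub _ _ _ (by fun_prop) (by fun_prop)]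
      refine norm_cfc_le hδ.le fun x hx => ?_
      rw [Real.norm_eq_abs, abs_sub_comm]
      exact (hp x (hb1 x hx)).le
    have e2 : ‖cfc F (star t * t) - Polynomial.aeval (star t * t) p‖ ≤ δ := by
      rw [← cfc_polynomial p (star t * t) (.star_mul_self t), ← cfc_sub _ _ _ (by fun_prop) (by fun_prop)]
      refine norm_cfc_le hδ.le fun x hx => ?_
      rw [Real.norm_eq_abs, abs_sub_comm]
      exact (hp x (hb2 x hx)).le
    have : cfc F (t * star t) * t - t * cfc F (star t * t)
        = (cfc F (t * star t) - Polynomial.aeval (t * star t) p) * t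
          - t * (cfc F (star t * t) - Polynomial.aeval (star t * t) p) := by
      rw [sub_mul, mul_sub, hpoly p]; abel
    rw [this]
    calc _ ≤ _ := norm_sub_le _ _
      _ ≤ δ * ‖t‖ + ‖t‖ * δ := by
        refine add_le_add ((norm_mul_le _ _).trans ?_) ((norm_mul_le _ _).trans ?_) <;> gcongr
      _ = _ := by ring
  have h0 : ‖cfc F (t * star t) * t - t * cfc F (star t * t)‖ ≤ 0 := by
    refine le_of_forall_pos_le_add fun η hη => ?_
    have := key (η / (2 * ‖t‖ + 1)) (by positivity)
    refine this.trans ?_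
    rw [zero_add, div_mul_eq_mul_div, div_le_iff₀ (by positivity)]
    nlinarith [norm_nonneg t]
  exact sub_eq_zero.mp (norm_le_zero_iff.mp h0)

theorem aux_spec {A : Type*} [CStarAlgebra A] (t : A) :
    ∀ x ∈ spectrum ℝ (star t * t), 0 ≤ x := by
  exact spectrum_star_mul_self_nonneg

theorem aux_fabs {A : Type*} [CStarAlgebra A] (t : A) (δ : ℝ) :
    cfc (fun x : ℝ => max (δ - x) 0) (cstarAbs t)
      = cfc (fun x : ℝ => max (δ - Real.sqrt x) 0) (star t * t) := by
  unfold cstarAbs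
  rw [← cfc_comp' (fun x : ℝ => max (δ - x) 0) Real.sqrt (star t * t) (by fun_prop) (by fun_prop)]

/-- left inverse modulo the ideal, with norm control -/
theorem aux_left {A : Type*} [CStarAlgebra A] (t : A) (δ : ℝ) (hδ : 0 < δ) (I : ClosedIdeal A)
    (h : cfc (fun x : ℝ => max (δ - x) 0) (cstarAbs t) ∈ I.carrier) :
    ∃ b : A, ‖b‖ ≤ 1 / δ ∧ 1 - b * t ∈ I.carrier := by
  rw [aux_fabs] at h
  have hpos : ∀ x : ℝ, 0 < max x (δ ^ 2) := fun x => lt_max_of_lt_right (by positivity)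
  have hg : Continuous (fun x : ℝ => (max x (δ ^ 2))⁻¹) :=
    Continuous.inv₀ (by fun_prop) (fun x => (hpos x).ne')
  set g : ℝ → ℝ := fun x => (max x (δ ^ 2))⁻¹ with hgdef
  have hid : cfc (fun x : ℝ => x) (star t * t) = star t * t := cfc_id' ℝ (star t * t)
  refine ⟨cfc g (star t * t) * star t, ?_, ?_⟩
  · have hsa : star (cfc g (star t * t)) = cfc g (star t * t) :=
      (cfc_predicate g (star t * t) : IsSelfAdjoint _).star_eq
    have e : cfc g (star t * t) * star t * star (cfc g (star t * t) * star t)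
        = cfc (fun x => g x * x * g x) (star t * t) := by
      rw [cfc_mul (fun x => g x * x) g _ (by fun_prop) (by fun_prop),
        cfc_mul g (fun x => x) _ (by fun_prop) (by fun_prop), hid, star_mul, star_star, hsa]
      simp only [mul_assoc]
    have hn : ‖cfc g (star t * t) * star t‖ * ‖cfc g (star t * t) * star t‖ ≤ 1 / δ ^ 2 := by
      rw [← CStarRing.norm_self_mul_star, e]
      refine norm_cfc_le (by positivity) fun x hx => ?_
      have hx0 := aux_spec t x hx
      have hp := hpos x
      have h1 : x ≤ max x (δ ^ 2) := le_max_left _ _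
      have h2 : δ ^ 2 ≤ max x (δ ^ 2) := le_max_right _ _
      simp only [hgdef]
      rw [Real.norm_of_nonneg (by positivity)]
      calc (max x (δ ^ 2))⁻¹ * x * (max x (δ ^ 2))⁻¹
          ≤ (max x (δ ^ 2))⁻¹ * (max x (δ ^ 2)) * (max x (δ ^ 2))⁻¹ := by gcongr
        _ = (max x (δ ^ 2))⁻¹ := by rw [inv_mul_cancel₀ hp.ne', one_mul]
        _ ≤ 1 / δ ^ 2 := by rw [one_div]; exact inv_anti₀ (by positivity) h2
    refine le_of_sq_le_sq ?_ (by positivity)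
    rw [sq, div_pow, one_pow]
    exact hn
  · have e : 1 - cfc g (star t * t) * star t * t
        = cfc (fun x : ℝ => max (δ - Real.sqrt x) 0) (star t * t)
          * cfc (fun x : ℝ => (δ + Real.sqrt x) / δ ^ 2) (star t * t) := by
      rw [← cfc_mul _ _ _ (by fun_prop) (by fun_prop), mul_assoc]
      nth_rewrite 2 [← hid]
      rw [← cfc_mul _ _ _ (by fun_prop) (by fun_prop), ← cfc_one ℝ (star t * t),
        ← cfc_sub _ _ _ (by fun_prop) (by fun_prop)]
      refine cfc_congr fun x hx => ?_
      have hx0 := aux_spec t x hx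
      have hsq := Real.sq_sqrt hx0
      have hs0 := Real.sqrt_nonneg x
      simp only [hgdef, Pi.one_apply]
      rcases le_total (Real.sqrt x) δ with hc | hc
      · have : x ≤ δ ^ 2 := by nlinarith
        rw [max_eq_right this, max_eq_left (by linarith)]
        field_simp
        nlinarith
      · have : δ ^ 2 ≤ x := by nlinarith
        have hxp : 0 < x := lt_of_lt_of_le (by positivity) this
        rw [max_eq_left this, max_eq_right (by linarith), inv_mul_cancel₀ hxp.ne']
        simp
    rw [e]
    exact I.mul_right_mem _ _ h

theorem aux_main {A : Type*} [CStarAlgebra A] (t r : A) (ε : ℝ) (hε : 0 < ε)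
    (hr : r ∈ regSet A) (hd : ‖t - r‖ < ε) (I : ClosedIdeal A)
    (h : cfc (fun x : ℝ => max (2 * ε - x) 0) (cstarAbs t) ∈ I.carrier) :
    cfc (fun x : ℝ => max (2 * ε - x) 0) (cstarAbs (star t)) ∈ I.carrier := by
  obtain ⟨b, hb, hbt⟩ := aux_left t (2 * ε) (by positivity) I h
  have hn : ‖b * (t - r)‖ ≤ 1 / 2 := by
    calc _ ≤ ‖b‖ * ‖t - r‖ := norm_mul_le _ _
      _ ≤ 1 / (2 * ε) * ε := by gcongr
      _ = 1 / 2 := by field_simp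
  obtain ⟨u, hu⟩ := isUnit_one_sub_of_norm_lt_one (lt_of_le_of_lt hn (by norm_num))
  set s : A := (↑u⁻¹ : A) * b with hs
  have hus : (u : A) * s = b := by rw [hs, Units.mul_inv_cancel_left]
  have hsn : ‖s‖ ≤ 1 / ε := by
    have e : s = b + b * (t - r) * s := by
      rw [hu, sub_mul, one_mul] at hus
      exact sub_eq_iff_eq_add.mp hus
    have h1 : ‖s‖ ≤ ‖b‖ + ‖b * (t - r)‖ * ‖s‖ := by
      calc ‖s‖ = ‖b + b * (t - r) * s‖ := by rw [← e]
        _ ≤ _ := (norm_add_le _ _).trans (add_le_add le_rfl (norm_mul_le _ _))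
    have h2 : ‖b * (t - r)‖ * ‖s‖ ≤ 1 / 2 * ‖s‖ := by gcongr
    have h3 : (1 / ε : ℝ) = 2 * (1 / (2 * ε)) := by field_simp
    linarith
  have hsr : 1 - s * r ∈ I.carrier := by
    have e : 1 - s * r = (↑u⁻¹ : A) * (1 - b * t) := by
      have : (1 : A) - b * t = u - b * r := by rw [hu]; noncomm_ring
      rw [this, mul_sub, Units.inv_mul, hs, mul_assoc]
    rw [e]; exact I.mul_left_mem _ _ hbt
  obtain ⟨c, hc1, hc2⟩ := hr I (Or.inl ⟨s, hsr⟩)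
  have hrs : 1 - r * s ∈ I.carrier := by
    have e : 1 - r * s = (1 - r * c) + r * ((1 - s * r) * c) - r * (s * (1 - r * c)) := by
      noncomm_ring
    rw [e]
    exact I.carrier.sub_mem (I.carrier.add_mem hc2 (I.mul_left_mem _ _ (I.mul_right_mem _ _ hsr)))
      (I.mul_left_mem _ _ (I.mul_left_mem _ _ hc2))
  have hn2 : ‖-((t - r) * s)‖ < 1 := by
    rw [norm_neg]
    calc _ ≤ ‖t - r‖ * ‖s‖ := norm_mul_le _ _
      _ ≤ ‖t - r‖ * (1 / ε) := by gcongr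
      _ < ε * (1 / ε) := by gcongr
      _ = 1 := by field_simp
  obtain ⟨v, hv⟩ := isUnit_one_sub_of_norm_lt_one hn2
  have htr : 1 - t * (s * (↑v⁻¹ : A)) ∈ I.carrier := by
    have e : 1 - t * (s * (↑v⁻¹ : A)) = (1 - r * s) * (↑v⁻¹ : A) := by
      have : (1 : A) - r * s = v - t * s := by rw [hv]; noncomm_ring
      rw [this, sub_mul, Units.mul_inv, ← mul_assoc t s]
    rw [e]; exact I.mul_right_mem _ _ hrs
  rw [aux_fabs] at h ⊢
  rw [star_star]
  have hi := aux_intertwine t (fun x : ℝ => max (2 * ε - Real.sqrt x) 0) (by fun_prop)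
  set P := cfc (fun x : ℝ => max (2 * ε - Real.sqrt x) 0) (t * star t)
  have e : P = P * (1 - t * (s * (↑v⁻¹ : A))) + (P * t) * (s * (↑v⁻¹ : A)) := by noncomm_ring
  rw [e, hi]
  exact I.carrier.add_mem (I.mul_left_mem _ _ htr)
    (I.mul_right_mem _ _ (I.mul_left_mem _ _ h))

theorem aux_star {A : Type*} [CStarAlgebra A] (r : A) (hr : r ∈ regSet A) :
    star r ∈ regSet A := by
  intro I hI
  let J : ClosedIdeal A :=
    { carrier :=
        { carrier := {x | star x ∈ I.carrier}
          add_mem' := fun {a b} ha hb => by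
            simp only [Set.mem_ofPred_eq, star_add] at *
            exact I.carrier.add_mem ha hb
          zero_mem' := by simp
          smul_mem' := fun c x hx => by
            simp only [Set.mem_ofPred_eq, star_smul] at *
            exact I.carrier.smul_mem _ hx }
      mul_left_mem := fun a x hx => by
        change star (a * x) ∈ I.carrier
        rw [star_mul]; exact I.mul_right_mem _ _ hx
      mul_right_mem := fun a x hx => by
        change star (x * a) ∈ I.carrier
        rw [star_mul]; exact I.mul_left_mem _ _ hx
      isClosed := I.isClosed.preimage continuous_star }
  have hJ : ∀ x, x ∈ J.carrier ↔ star x ∈ I.carrier := fun x => Iff.rfl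
  obtain ⟨b, h1, h2⟩ := hr J (by
    rcases hI with ⟨b, hb⟩ | ⟨b, hb⟩
    · exact Or.inr ⟨star b, by simpa [hJ] using hb⟩
    · exact Or.inl ⟨star b, by simpa [hJ] using hb⟩)
  exact ⟨star b, by simpa [hJ] using h2, by simpa [hJ] using h1⟩

/-- If `dist(t, R(A)) < ε`, then `t` is `2ε`-almost regular. -/
theorem almostRegular_two_mul_of_infDist_lt {A : Type*} [CStarAlgebra A] (t : A) (ε : ℝ)
    (hε : 0 < ε) (h : Metric.infDist t (regSet A) < ε) :
    AlmostRegular (2 * ε) t := by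
  have hne : (regSet A).Nonempty := ⟨1, fun I _ => ⟨1, by simp, by simp⟩⟩
  obtain ⟨r, hr, hd⟩ := (Metric.infDist_lt_iff hne).mp h
  rw [dist_eq_norm] at hd
  intro I
  refine ⟨aux_main t r ε hε hr hd I, fun h2 => ?_⟩
  have := aux_main (star t) (star r) ε hε (aux_star r hr)
    (by rwa [← star_sub, norm_star]) I h2
  rwa [star_star] at this
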